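/- If (a,b,c,d) ∈ ℂ⁴ with b ≠ 0 satisfies the equations (E2): a² = 1; b² + 4c/b − c² − 4cd + bc²d + 2bcd² = 0; −2 + 2bc + 2c²/b² − c⁴/4 + 2bd − 2c²d/b + c²d² = 0; −2/b² + 2d/b − d² = 0, then 24a(−1 + bc + bd)/b ≠ 0 and (6a/b²)·(−3b³ − 12c + 7bc² + 3b⁴d + 24bcd − 6b²c²d − 18b²cd² + 3b³c²d² + 6b³cd³) ≠ 0. -/

import Mathlib

/-!
Put `s = b * d - 1`. Multiplied by `b ^ 2`, the last equation of (E2) says `s ^ 2 = -1`. Modulo this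
relation the two middle equations collapse to `b ^ 2 + s * c ^ 2 = 0`, which forces `c ≠ 0`, and
`8 * (s + b * c) = c ^ 4`. The left and right quantum dimensions then become `3 * a * c ^ 4 / b` and
`24 * a * c ^ 2 / b`, so neither vanishes.
-/

section QuantumDimensions

variable {K : Type*} [Field K] {a b c d : K}

/-- The left quantum dimension of the version-2 matrix factorization of `Q₁₀ − K₁₄`, as a rational
function of the parameters of the factorization. -/
def leftQuantumDim (a b c d : K) : K :=
  24 * a * (-1 + b * c + b * d) / b

/-- The right quantum dimension of the version-2 matrix factorization of `Q₁₀ − K₁₄`, as a rational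
function of the parameters of the factorization. -/
def rightQuantumDim (a b c d : K) : K :=
  (6 * a / b ^ 2) * (-3 * b ^ 3 - 12 * c + 7 * b * c ^ 2 + 3 * b ^ 4 * d + 24 * b * c * d -
    6 * b ^ 2 * c ^ 2 * d - 18 * b ^ 2 * c * d ^ 2 + 3 * b ^ 3 * c ^ 2 * d ^ 2 +
    6 * b ^ 3 * c * d ^ 3)

theorem mul_sub_one_sq_eq_neg_one (hb : b ≠ 0) (h : -2 / b ^ 2 + 2 * d / b - d ^ 2 = 0) :
    (b * d - 1) ^ 2 = -1 := by
  have clear_denom : b ^ 2 * (-2 / b ^ 2 + 2 * d / b - d ^ 2) = -1 - (b * d - 1) ^ 2 := by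
    field_simp
    ring
  linear_combination clear_denom - b ^ 2 * h

theorem sq_add_mul_sub_one_mul_sq_eq_zero (hb : b ≠ 0) (hs : (b * d - 1) ^ 2 = -1)
    (h : b ^ 2 + 4 * c / b - c ^ 2 - 4 * c * d + b * c ^ 2 * d + 2 * b * c * d ^ 2 = 0) :
    b ^ 2 + (b * d - 1) * c ^ 2 = 0 := by
  have expand : b ^ 2 + 4 * c / b - c ^ 2 - 4 * c * d + b * c ^ 2 * d + 2 * b * c * d ^ 2 =
      b ^ 2 + (b * d - 1) * c ^ 2 + 2 * c / b * ((b * d - 1) ^ 2 + 1) := by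
    field_simp
    ring
  linear_combination h - expand - 2 * c / b * hs

theorem eight_mul_neg_one_add_mul_add_mul_eq_pow_four (h_two : (2 : K) ≠ 0) (hb : b ≠ 0)
    (hs : (b * d - 1) ^ 2 = -1)
    (h : -2 + 2 * b * c + 2 * c ^ 2 / b ^ 2 - c ^ 4 / 4 + 2 * b * d - 2 * c ^ 2 * d / b +
      c ^ 2 * d ^ 2 = 0) :
    8 * (-1 + b * c + b * d) = c ^ 4 := by
  have h_four : (4 : K) ≠ 0 := by
    convert pow_ne_zero 2 h_two using 1
    norm_num
  have expand : 4 * (-2 + 2 * b * c + 2 * c ^ 2 / b ^ 2 - c ^ 4 / 4 + 2 * b * d -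
        2 * c ^ 2 * d / b + c ^ 2 * d ^ 2) =
      8 * (-1 + b * c + b * d) - c ^ 4 + 4 * c ^ 2 / b ^ 2 * ((b * d - 1) ^ 2 + 1) := by
    field_simp
    ring
  linear_combination 4 * h - expand - 4 * c ^ 2 / b ^ 2 * hs

theorem leftQuantumDim_eq (h : 8 * (-1 + b * c + b * d) = c ^ 4) :
    leftQuantumDim a b c d = 3 * a * c ^ 4 / b := by
  rw [leftQuantumDim, ← h]
  ring

theorem rightQuantumDim_eq (hb : b ≠ 0) (hs : (b * d - 1) ^ 2 = -1)
    (h : b ^ 2 + (b * d - 1) * c ^ 2 = 0) :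
    rightQuantumDim a b c d = 24 * a * c ^ 2 / b := by
  have factor_eq : -3 * b ^ 3 - 12 * c + 7 * b * c ^ 2 + 3 * b ^ 4 * d + 24 * b * c * d -
      6 * b ^ 2 * c ^ 2 * d - 18 * b ^ 2 * c * d ^ 2 + 3 * b ^ 3 * c ^ 2 * d ^ 2 +
      6 * b ^ 3 * c * d ^ 3 = 4 * b * c ^ 2 := by
    linear_combination 3 * (b * d - 1) * b * h + 6 * c * (b * d - 1) * hs
  rw [rightQuantumDim, factor_eq]
  field_simp
  ring

theorem quantum_dimensions_nonzero_version2_general (h_two : (2 : K) ≠ 0)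
    (h_three : (3 : K) ≠ 0) (ha : a ≠ 0) (hb : b ≠ 0)
    (h2 : b ^ 2 + 4 * c / b - c ^ 2 - 4 * c * d + b * c ^ 2 * d + 2 * b * c * d ^ 2 = 0)
    (h3 : -2 + 2 * b * c + 2 * c ^ 2 / b ^ 2 - c ^ 4 / 4 + 2 * b * d - 2 * c ^ 2 * d / b +
      c ^ 2 * d ^ 2 = 0)
    (h4 : -2 / b ^ 2 + 2 * d / b - d ^ 2 = 0) :
    leftQuantumDim a b c d ≠ 0 ∧ rightQuantumDim a b c d ≠ 0 := by
  have hs := mul_sub_one_sq_eq_neg_one hb h4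
  have hbc := sq_add_mul_sub_one_mul_sq_eq_zero hb hs h2
  have hc : c ≠ 0 := by
    rintro rfl
    exact hb (by simpa using hbc)
  have h_twenty_four : (24 : K) ≠ 0 := by
    convert mul_ne_zero (pow_ne_zero 3 h_two) h_three using 1
    norm_num
  rw [leftQuantumDim_eq (eight_mul_neg_one_add_mul_add_mul_eq_pow_four h_two hb hs h3),
    rightQuantumDim_eq hb hs hbc]
  exact ⟨div_ne_zero (mul_ne_zero (mul_ne_zero h_three ha) (pow_ne_zero 4 hc)) hb,
    div_ne_zero (mul_ne_zero (mul_ne_zero h_twenty_four ha) (pow_ne_zero 2 hc)) hb⟩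

end QuantumDimensions

/-- For every solution `(a,b,c,d)` of the equations (E2) with `b ≠ 0`, the left and
right quantum dimensions of the version-2 matrix factorization of `Q₁₀ − K₁₄` are
nonzero. -/
theorem quantum_dimensions_nonzero_version2 (a b c d : ℂ) (hb : b ≠ 0)
    (h1 : a^2 = 1)
    (h2 : b^2 + 4*c/b - c^2 - 4*c*d + b*c^2*d + 2*b*c*d^2 = 0)
    (h3 : -2 + 2*b*c + 2*c^2/b^2 - c^4/4 + 2*b*d - 2*c^2*d/b + c^2*d^2 = 0)
    (h4 : -2/b^2 + 2*d/b - d^2 = 0) :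
    24*a*(-1 + b*c + b*d)/b ≠ 0 ∧
    (6*a/b^2) * (-3*b^3 - 12*c + 7*b*c^2 + 3*b^4*d + 24*b*c*d - 6*b^2*c^2*d
      - 18*b^2*c*d^2 + 3*b^3*c^2*d^2 + 6*b^3*c*d^3) ≠ 0 := by
  have ha : a ≠ 0 := (IsUnit.of_pow_eq_one h1 two_ne_zero).ne_zero
  exact quantum_dimensions_nonzero_version2_general two_ne_zero three_ne_zero ha hb h2 h3 h4
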